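/- arXiv:2011.12604 — 2 statements merged into one kernel-verified Lean document; each statement's English description precedes it below -/
import Mathlib

section
/- Let R be a nonempty convex compact subset of R^n and let ρ : R × R → R be continuous in its first argument for each fixed second argument, lower semicontinuous jointly in both arguments, and convex in its second argument for each fixed first argument. Then the set-valued map ζ : R ⇉ R defined by ζ(x) = argmin_{z ∈ R} ρ(x, z) has a fixed point, i.e., there exists x̃ ∈ R with x̃ ∈ ζ(x̃). -/
/-- Scarf dominance of a finite set with respect to a family of utilities. -/
def ScarfDom {V I : Type*} (u : I → V → ℕ) (S : Finset V) : Prop :=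
  ∀ y, ∃ i, ∀ x ∈ S, u i y ≤ u i x

theorem ScarfDom.mono {V I : Type*} {u : I → V → ℕ} {S S' : Finset V}
    (h : ScarfDom u S) (hs : S' ⊆ S) : ScarfDom u S' := fun y => by
  obtain ⟨i, hi⟩ := h y
  exact ⟨i, fun x hx => hi x (hs hx)⟩

theorem scarf_door_two {V I : Type*} [Fintype V] [DecidableEq V] [Fintype I] [DecidableEq I]
    (u : I → V → ℕ) (hu : ∀ i, Function.Injective (u i)) (S : Finset V) (hS : S.Nonempty)
    (hcard : S.card + 1 = Fintype.card I) (hd : ScarfDom u S)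
    (hM : ∀ a, ∃ y, ∀ i, i ≠ a → ∃ x ∈ S, u i x < u i y) :
    ∃ x1 x2, x1 ≠ x2 ∧ x1 ∉ S ∧ x2 ∉ S ∧
      ∀ x, x ∉ S → (ScarfDom u (insert x S) ↔ x = x1 ∨ x = x2) := by
  have hm : ∀ i, ∃ z ∈ S, ∀ x ∈ S, u i z ≤ u i x := fun i => S.exists_min_image (u i) hS
  choose m hmS hmin using hm
  have hsurj : ∀ x ∈ S, ∃ i, m i = x := by
    intro x hx
    obtain ⟨i, hi⟩ := hd x
    exact ⟨i, hu i (le_antisymm (hmin i x hx) (hi _ (hmS i)))⟩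
  -- no two coordinates may be dropped
  have hpair : ∀ i j, i ≠ j → ¬ (∀ x ∈ S, ∃ k, k ≠ i ∧ k ≠ j ∧ m k = x) := by
    intro i j hij h
    have hsub : S ⊆ ((Finset.univ.erase i).erase j).image m := by
      intro x hx
      obtain ⟨k, hki, hkj, hk⟩ := h x hx
      exact Finset.mem_image.2 ⟨k, by simp [hki, hkj], hk⟩
    have h1 := (Finset.card_le_card hsub).trans Finset.card_image_le
    rw [Finset.card_erase_of_mem (by simp [hij.symm]), Finset.card_erase_of_mem (by simp),
      Finset.card_univ] at h1
    have h3 := hS.card_pos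
    omega
  obtain ⟨a, -, b, -, hab, hmab⟩ := Finset.exists_ne_map_eq_of_card_lt_of_maps_to
    (s := (Finset.univ : Finset I)) (t := S) (f := m)
    (by rw [Finset.card_univ]; omega) (fun i _ => hmS i)
  have hQab : ∀ j, (∀ x ∈ S, ∃ i, i ≠ j ∧ m i = x) → j = a ∨ j = b := by
    intro j hj
    by_contra! hne
    refine hpair j a hne.1 fun x hx => ?_
    obtain ⟨i, hij, hi⟩ := hj x hx
    by_cases hia : i = a
    · exact ⟨b, hne.2.symm, hab.symm, by rw [← hmab, ← hia, hi]⟩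
    · exact ⟨i, hij, hia, hi⟩
  have hQa : ∀ x ∈ S, ∃ i, i ≠ a ∧ m i = x := by
    intro x hx
    obtain ⟨i, hi⟩ := hsurj x hx
    by_cases hia : i = a
    · exact ⟨b, hab.symm, by rw [← hmab, ← hia, hi]⟩
    · exact ⟨i, hia, hi⟩
  have hQb : ∀ x ∈ S, ∃ i, i ≠ b ∧ m i = x := by
    intro x hx
    obtain ⟨i, hi⟩ := hsurj x hx
    by_cases hib : i = b
    · exact ⟨a, hab, by rw [hmab, ← hib, hi]⟩
    · exact ⟨i, hib, hi⟩
  have hX : ∀ j, ∃ X, (∀ i, i ≠ j → u i (m i) < u i X) ∧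
      ∀ y, (∀ i, i ≠ j → u i (m i) < u i y) → u j y ≤ u j X := by
    intro j
    have hne : (Finset.univ.filter fun y => ∀ i, i ≠ j → u i (m i) < u i y).Nonempty := by
      obtain ⟨y, hy⟩ := hM j
      refine ⟨y, ?_⟩
      simp only [Finset.mem_filter, Finset.mem_univ, true_and]
      intro i hi
      obtain ⟨x, hx, hlt⟩ := hy i hi
      exact (hmin i x hx).trans_lt hlt
    obtain ⟨X, hX1, hX2⟩ := Finset.exists_max_image _ (u j) hne
    simp only [Finset.mem_filter, Finset.mem_univ, true_and] at hX1 hX2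
    exact ⟨X, hX1, hX2⟩
  choose X hX1 hX2 using hX
  have hnot : ∀ j, (∀ x ∈ S, ∃ i, i ≠ j ∧ m i = x) → X j ∉ S := by
    intro j hj hmem
    obtain ⟨i, hij, hi⟩ := hj _ hmem
    have := hX1 j i hij
    rw [hi] at this
    exact lt_irrefl _ this
  have hdomX : ∀ j, ScarfDom u (insert (X j) S) := by
    intro j y
    by_cases hy : ∀ i, i ≠ j → u i (m i) < u i y
    · refine ⟨j, ?_⟩
      obtain ⟨i, hi⟩ := hd y
      have hij : i = j := by
        by_contra hij
        exact absurd (hi _ (hmS i)) (not_le.2 (hy i hij))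
      subst hij
      intro x hx
      rcases Finset.mem_insert.1 hx with rfl | hx
      · exact hX2 i y hy
      · exact hi x hx
    · push Not at hy
      obtain ⟨i, hij, hi⟩ := hy
      refine ⟨i, fun x hx => ?_⟩
      rcases Finset.mem_insert.1 hx with rfl | hx
      · exact hi.trans (hX1 j i hij).le
      · exact hi.trans (hmin i x hx)
  refine ⟨X a, X b, ?_, hnot a hQa, hnot b hQb, fun x hxS => ⟨?_, ?_⟩⟩
  · intro h
    obtain ⟨i, hi⟩ := hd (X a)
    have hi := hi _ (hmS i)
    by_cases hia : i = a
    · have := hX1 b i (by rw [hia]; exact hab)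
      rw [← h] at this
      omega
    · have := hX1 a i hia
      omega
  · intro hD
    obtain ⟨j, hj⟩ := hD x
    have key : ∀ i, (∀ x' ∈ S, u i x ≤ u i x') → ∀ x' ∈ S, ∀ k,
        (∀ z ∈ insert x S, u k x' ≤ u k z) → k ≠ i := by
      rintro i hi x' hx' k hk rfl
      have h1 := hi x' hx'
      have h2 := hk x (Finset.mem_insert_self _ _)
      have := hu k (le_antisymm h1 h2)
      exact hxS (this ▸ hx')
    have hjS : ∀ x' ∈ S, u j x ≤ u j x' := fun x' h => hj x' (Finset.mem_insert_of_mem h)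
    have hmk : ∀ x' ∈ S, ∀ k, (∀ z ∈ insert x S, u k x' ≤ u k z) → m k = x' := by
      intro x' hx' k hk
      exact hu k (le_antisymm (hmin k x' hx') (hk _ (Finset.mem_insert_of_mem (hmS k))))
    have hjab : j = a ∨ j = b := by
      refine hQab j fun x' hx' => ?_
      obtain ⟨k, hk⟩ := hD x'
      exact ⟨k, key j hjS x' hx' k hk, hmk x' hx' k hk⟩
    have hxM : ∀ i, i ≠ j → u i (m i) < u i x := by
      intro i hij
      by_contra! hle
      refine hpair i j hij fun x' hx' => ?_
      obtain ⟨k, hk⟩ := hD x'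
      exact ⟨k, key i (fun z hz => hle.trans (hmin i z hz)) x' hx' k hk,
        key j hjS x' hx' k hk, hmk x' hx' k hk⟩
    have hxX : x = X j := by
      obtain ⟨i, hi⟩ := hD (X j)
      have hij : i = j := by
        by_contra hij
        have h1 := hX1 j i hij
        have h2 := hi _ (Finset.mem_insert_of_mem (hmS i))
        omega
      subst hij
      exact hu i (le_antisymm (hX2 i x hxM) (hi x (Finset.mem_insert_self _ _)))
    rcases hjab with rfl | rfl
    · exact Or.inl hxX
    · exact Or.inr hxX
  · rintro (rfl | rfl)
    · exact hdomX a
    · exact hdomX b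

/-- A non-colourful room has an even number of nearly colourful doors. -/
theorem scarf_room_even {V I : Type*} [DecidableEq V] [Fintype I] [DecidableEq I]
    (c : V → I) (i0 : I) (S : Finset V) (hcard : S.card = Fintype.card I)
    (hnc : S.image c ≠ Finset.univ) :
    Even (S.filter fun x => (S.erase x).image c = Finset.univ.erase i0).card := by
  by_cases hne : (S.filter fun x => (S.erase x).image c = Finset.univ.erase i0).Nonempty
  swap
  · rw [Finset.not_nonempty_iff_eq_empty] at hne
    simp [hne]
  obtain ⟨x, hx⟩ := hne
  obtain ⟨hxS, hx⟩ := Finset.mem_filter.1 hx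
  have hIm : S.image c = insert (c x) (Finset.univ.erase i0) := by
    rw [← hx, ← Finset.image_insert, Finset.insert_erase hxS]
  have hcx : c x ≠ i0 := by
    intro h
    apply hnc
    rw [hIm, h, Finset.insert_erase (Finset.mem_univ _)]
  have hmem : c x ∈ (S.erase x).image c := by rw [hx]; simp [hcx]
  obtain ⟨x', hx'S, hx'⟩ := Finset.mem_image.1 hmem
  have hinj : Set.InjOn c (S.erase x) := by
    apply Finset.card_image_iff.1
    rw [hx, Finset.card_erase_of_mem (Finset.mem_univ _), Finset.card_erase_of_mem hxS, hcard,
      Finset.card_univ]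
  obtain ⟨hne', hx'S'⟩ := Finset.mem_erase.1 hx'S
  have : (S.filter fun x => (S.erase x).image c = Finset.univ.erase i0) = {x, x'} := by
    ext y
    simp only [Finset.mem_filter, Finset.mem_insert, Finset.mem_singleton]
    constructor
    · rintro ⟨hyS, hy⟩
      by_contra! hyn
      have hyi : c y ≠ i0 := by
        have : c y ∈ (S.erase x).image c := Finset.mem_image_of_mem _ (by simp [hyn.1, hyS])
        rw [hx] at this
        simpa using this
      have : c y ∈ (S.erase y).image c := by rw [hy]; simp [hyi]
      obtain ⟨z, hz, hzc⟩ := Finset.mem_image.1 this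
      obtain ⟨hzy, hzS⟩ := Finset.mem_erase.1 hz
      by_cases hzx : z = x
      · subst hzx
        have := hinj (Finset.mem_coe.2 hx'S) (by simp [hyn.1, hyS]) (hx'.trans hzc)
        exact hyn.2 this.symm
      · exact hzy (hinj (by simp [hzx, hzS]) (by simp [hyn.1, hyS]) hzc)
    · rintro (rfl | rfl)
      · exact ⟨hxS, hx⟩
      · refine ⟨hx'S', ?_⟩
        rw [← hx]
        ext k
        simp only [Finset.mem_image, Finset.mem_erase]
        constructor
        · rintro ⟨z, ⟨hz1, hz2⟩, rfl⟩
          by_cases hzx : z = x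
          · exact ⟨y, ⟨hne', hx'S'⟩, by rw [hzx, hx']⟩
          · exact ⟨z, ⟨hzx, hz2⟩, rfl⟩
        · rintro ⟨z, ⟨hz1, hz2⟩, rfl⟩
          by_cases hzx : z = y
          · exact ⟨x, ⟨hne'.symm, hxS⟩, by rw [hzx, hx']⟩
          · exact ⟨z, ⟨hzx, hz2⟩, rfl⟩
  rw [this, Finset.card_pair hne'.symm]
  exact even_two

theorem scarf_colorful {V I : Type*} [Fintype V] [DecidableEq V] [Fintype I] [DecidableEq I]
    (u : I → V → ℕ) (hu : ∀ i, Function.Injective (u i)) (s : I → V) (c : V → I)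
    (hcs : ∀ i, c (s i) = i) (hs1 : ∀ i v, v ≠ s i → u i (s i) < u i v)
    (hs2 : ∀ i j v, i ≠ j → v ∉ Set.range s → u i v < u i (s j))
    (i0 : I) (hT : ∃ v, v ∉ Set.range s) :
    ∃ S : Finset V, S.card = Fintype.card I ∧ ScarfDom u S ∧ S.image c = Finset.univ := by
  classical
  by_contra! hcon
  have hs1' : ∀ i v, u i (s i) ≤ u i v := by
    intro i v
    by_cases h : v = s i
    · rw [h]
    · exact (hs1 i v h).le
  have hsinj : Function.Injective s := fun i j h => by rw [← hcs i, h, hcs]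
  set rooms : Finset (Finset V) :=
    Finset.univ.filter fun S => S.card = Fintype.card I ∧ ScarfDom u S with hrooms
  set doors : Finset (Finset V) :=
    Finset.univ.filter fun S => S.card + 1 = Fintype.card I ∧ ScarfDom u S ∧
      S.image c = Finset.univ.erase i0 with hdoors
  set fR : Finset V → Finset V :=
    fun S => S.filter fun x => (S.erase x).image c = Finset.univ.erase i0 with hfR
  set fD : Finset V → Finset V :=
    fun S => Finset.univ.filter fun x => x ∉ S ∧ ScarfDom u (insert x S) with hfD
  have hcount : ∑ S ∈ rooms, (fR S).card = ∑ S ∈ doors, (fD S).card := by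
    rw [← Finset.card_sigma, ← Finset.card_sigma]
    refine Finset.card_bij' (fun p _ => ⟨p.1.erase p.2, p.2⟩) (fun p _ => ⟨insert p.2 p.1, p.2⟩)
      ?_ ?_ ?_ ?_
    · rintro ⟨S, x⟩ h
      simp only [hrooms, hdoors, hfR, hfD, Finset.mem_sigma, Finset.mem_filter, Finset.mem_univ,
        true_and] at h ⊢
      obtain ⟨⟨h1, h2⟩, h3, h4⟩ := h
      refine ⟨⟨?_, h2.mono (Finset.erase_subset _ _), h4⟩, by simp, ?_⟩
      · rw [Finset.card_erase_add_one h3, h1]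
      · rw [Finset.insert_erase h3]; exact h2
    · rintro ⟨S, x⟩ h
      simp only [hrooms, hdoors, hfR, hfD, Finset.mem_sigma, Finset.mem_filter, Finset.mem_univ,
        true_and] at h ⊢
      obtain ⟨⟨h1, h2, h3⟩, h4, h5⟩ := h
      refine ⟨⟨?_, h5⟩, by simp, ?_⟩
      · rw [Finset.card_insert_of_notMem h4, h1]
      · rw [Finset.erase_insert h4]; exact h3
    · rintro ⟨S, x⟩ h
      simp only [hfR, Finset.mem_sigma, Finset.mem_filter] at h
      simp [Finset.insert_erase h.2.1]
    · rintro ⟨S, x⟩ h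
      simp only [hfD, Finset.mem_sigma, Finset.mem_filter] at h
      simp [Finset.erase_insert h.2.2.1]
  have hevenR : Even (∑ S ∈ rooms, (fR S).card) := by
    refine Finset.even_sum _ fun S hS => ?_
    simp only [hrooms, Finset.mem_filter, Finset.mem_univ, true_and] at hS
    exact scarf_room_even c i0 S hS.1 (hcon S hS.1 hS.2)
  set E : Finset V := (Finset.univ.erase i0).image s with hE
  have hmemE : ∀ j, j ≠ i0 → s j ∈ E := fun j hj => Finset.mem_image_of_mem _ (by simp [hj])
  have hEmem : E ∈ doors := by
    simp only [hdoors, Finset.mem_filter, Finset.mem_univ, true_and]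
    refine ⟨?_, ?_, ?_⟩
    · rw [hE, Finset.card_image_of_injective _ hsinj, Finset.card_erase_add_one (Finset.mem_univ _),
        Finset.card_univ]
    · intro y
      by_cases hy : y ∈ Set.range s
      · obtain ⟨j, rfl⟩ := hy
        exact ⟨j, fun x _ => hs1' j x⟩
      · refine ⟨i0, fun x hx => ?_⟩
        obtain ⟨j, hj, rfl⟩ := Finset.mem_image.1 hx
        exact (hs2 i0 j y (Finset.ne_of_mem_erase hj).symm hy).le
    · rw [hE, Finset.image_image]
      have : c ∘ s = id := funext hcs
      rw [this, Finset.image_id]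
  have hfE : (fD E).card = 1 := by
    have hne : (Finset.univ.filter fun v => v ∉ Set.range s).Nonempty := by
      obtain ⟨v, hv⟩ := hT
      exact ⟨v, by simpa using hv⟩
    obtain ⟨X, hX1, hX2⟩ := Finset.exists_max_image _ (u i0) hne
    simp only [Finset.mem_filter, Finset.mem_univ, true_and] at hX1 hX2
    rw [Finset.card_eq_one]
    refine ⟨X, ?_⟩
    ext x
    simp only [hfD, Finset.mem_filter, Finset.mem_univ, true_and, Finset.mem_singleton]
    constructor
    · rintro ⟨hxE, hD⟩
      have hxr : x ∉ Set.range s := by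
        rintro ⟨j, rfl⟩
        have hj : j = i0 := by
          by_contra hj
          exact hxE (hmemE j hj)
        obtain ⟨i, hi⟩ := hD X
        have hmem : s i ∈ insert (s j) E := by
          by_cases h : i = i0
          · rw [h, hj]; exact Finset.mem_insert_self _ _
          · exact Finset.mem_insert_of_mem (hmemE i h)
        have h1 := hi _ hmem
        have h2 := hs1 i X (fun h => hX1 ⟨i, h.symm⟩)
        omega
      obtain ⟨i, hi⟩ := hD X
      have hii : i = i0 := by
        by_contra h
        have h1 := hi _ (Finset.mem_insert_of_mem (hmemE i h))
        have h2 := hs1 i X (fun h => hX1 ⟨i, h.symm⟩)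
        omega
      subst hii
      exact hu i (le_antisymm (hX2 x hxr) (hi x (Finset.mem_insert_self _ _)))
    · rintro rfl
      refine ⟨fun h => ?_, fun y => ?_⟩
      · obtain ⟨j, -, rfl⟩ := Finset.mem_image.1 h
        exact hX1 ⟨j, rfl⟩
      · by_cases hy : y ∈ Set.range s
        · obtain ⟨j, rfl⟩ := hy
          exact ⟨j, fun x _ => hs1' j x⟩
        · refine ⟨i0, fun z hz => ?_⟩
          rcases Finset.mem_insert.1 hz with rfl | hz
          · exact hX2 y hy
          · obtain ⟨j, hj, rfl⟩ := Finset.mem_image.1 hz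
            exact (hs2 i0 j y (Finset.ne_of_mem_erase hj).symm hy).le
  have hevenD : Even (∑ S ∈ doors.erase E, (fD S).card) := by
    refine Finset.even_sum _ fun S hS => ?_
    obtain ⟨hSE, hS⟩ := Finset.mem_erase.1 hS
    simp only [hdoors, Finset.mem_filter, Finset.mem_univ, true_and] at hS
    obtain ⟨h1, h2, h3⟩ := hS
    have hv : ∃ v ∈ S, v ∉ Set.range s := by
      by_contra! hall
      apply hSE
      rw [hE, ← h3, Finset.image_image]
      ext x
      simp only [Finset.mem_image, Function.comp]
      constructor
      · intro hx
        obtain ⟨j, rfl⟩ := hall x hx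
        exact ⟨s j, hx, by rw [hcs]⟩
      · rintro ⟨y, hy, rfl⟩
        obtain ⟨j, rfl⟩ := hall y hy
        rwa [hcs]
    obtain ⟨v, hvS, hv⟩ := hv
    obtain ⟨x1, x2, hne, hx1, hx2, hiff⟩ := scarf_door_two u hu S ⟨v, hvS⟩ h1 h2
      (fun a => ⟨s a, fun i hi => ⟨v, hvS, hs2 i a v hi hv⟩⟩)
    have : fD S = {x1, x2} := by
      ext x
      simp only [hfD, Finset.mem_filter, Finset.mem_univ, true_and, Finset.mem_insert,
        Finset.mem_singleton]
      constructor
      · rintro ⟨ha, hb⟩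
        exact (hiff x ha).1 hb
      · intro h
        have hx : x ∉ S := by rcases h with rfl | rfl <;> assumption
        exact ⟨hx, (hiff x hx).2 h⟩
    rw [this, Finset.card_pair hne]
    exact even_two
  rw [hcount, ← Finset.add_sum_erase _ _ hEmem, hfE] at hevenR
  rw [Nat.even_iff] at hevenR hevenD
  omega

/-- Grid version. -/
theorem scarf_grid {I : Type*} [Fintype I] [DecidableEq I] [Nonempty I] (N : ℕ)
    (col : (I → ℕ) → I) :
    ∃ (σ : Finset (I → ℕ)) (C : Finset I), σ.Nonempty ∧
      (∀ x ∈ σ, ∑ i, x i = N) ∧ (∀ i ∈ C, ∃ x ∈ σ, col x = i) ∧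
      (∀ x ∈ σ, ∀ i ∉ C, x i < Fintype.card I) ∧
      (∀ x ∈ σ, ∀ y ∈ σ, ∀ i, x i < y i + Fintype.card I) := by
  classical
  let T := {x : I → Fin (N + 1) // ∑ i, (x i : ℕ) = N}
  let V := T ⊕ I
  let M := Fintype.card V
  let e : V ≃ Fin M := Fintype.equivFin V
  let base : I → V → ℕ := fun i v =>
    Sum.elim (fun x : T => (x.1 i : ℕ) + 1) (fun j => if j = i then 0 else N + 2) v
  let u : I → V → ℕ := fun i v => base i v * M + e v
  have hlt : ∀ i v w, base i v < base i w → u i v < u i w := by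
    intro i v w h
    have h1 : (e v : ℕ) < M := (e v).2
    have h2 : (base i v + 1) * M ≤ base i w * M := Nat.mul_le_mul_right _ h
    simp only [u]
    nlinarith
  have hle : ∀ i v w, u i v ≤ u i w → base i v ≤ base i w := by
    intro i v w h
    by_contra! h'
    exact absurd (hlt i w v h') (not_lt.2 h)
  have hu : ∀ i, Function.Injective (u i) := by
    intro i v w h
    have h1 := le_antisymm (hle i v w h.le) (hle i w v h.ge)
    simp only [u, h1] at h
    exact e.injective (Fin.ext (by omega))
  have hmk : ∀ y : I → ℕ, ∑ i, y i = N → ∃ t : T, ∀ i, (t.1 i : ℕ) = y i := by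
    intro y hy
    have hb : ∀ i, y i < N + 1 := by
      intro i
      have := Finset.single_le_sum (f := y) (fun _ _ => Nat.zero_le _) (Finset.mem_univ i)
      omega
    exact ⟨⟨fun i => ⟨y i, hb i⟩, hy⟩, fun i => rfl⟩
  let i0 : I := Classical.arbitrary I
  obtain ⟨t0, -⟩ := hmk (Pi.single i0 N) (by simp)
  let c : V → I := Sum.elim (fun x : T => col fun i => (x.1 i : ℕ)) id
  obtain ⟨S, hScard, hSdom, hScol⟩ := scarf_colorful u hu (Sum.inr : I → V) c (fun i => rfl)
    (by
      intro i v hv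
      apply hlt
      rcases v with x | j
      · simp [base]
      · have : j ≠ i := fun h => hv (by rw [h])
        simp [base, this])
    (by
      intro i j v hij hv
      apply hlt
      rcases v with x | k
      · have := (x.1 i).2
        simp only [base, Sum.elim_inl, Sum.elim_inr, if_neg hij.symm]
        omega
      · exact absurd ⟨k, rfl⟩ hv)
    i0 ⟨Sum.inl t0, by simp⟩
  let val : T → I → ℕ := fun t i => (t.1 i : ℕ)
  let τ : Finset T := Finset.univ.filter fun t => (Sum.inl t : V) ∈ S
  let C : Finset I := Finset.univ.filter fun i => (Sum.inr i : V) ∉ S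
  have hdom : ∀ t : T, ∃ i ∈ C, ∀ x ∈ τ, val t i ≤ val x i := by
    intro t
    obtain ⟨i, hi⟩ := hSdom (Sum.inl t)
    refine ⟨i, ?_, fun x hx => ?_⟩
    · simp only [C, Finset.mem_filter, Finset.mem_univ, true_and]
      intro h
      have := hle _ _ _ (hi _ h)
      simp [base] at this
    · have hx : (Sum.inl x : V) ∈ S := by simpa [τ] using hx
      have := hle _ _ _ (hi _ hx)
      simpa [base, val] using this
  have hCcol : ∀ i ∈ C, ∃ x ∈ τ, col (val x) = i := by
    intro i hi
    have : i ∈ S.image c := by rw [hScol]; exact Finset.mem_univ _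
    obtain ⟨v, hv, hvi⟩ := Finset.mem_image.1 this
    rcases v with x | j
    · exact ⟨x, by simpa [τ] using hv, hvi⟩
    · have : j = i := hvi
      subst this
      simp only [C, Finset.mem_filter, Finset.mem_univ, true_and] at hi
      exact absurd hv hi
  obtain ⟨i1, hi1, -⟩ := hdom t0
  obtain ⟨x1, hx1, -⟩ := hCcol i1 hi1
  have hmin : ∀ i, ∃ z ∈ τ, ∀ x ∈ τ, val z i ≤ val x i :=
    fun i => τ.exists_min_image (fun x => val x i) ⟨x1, hx1⟩
  choose z hz hzmin using hmin
  set m : I → ℕ := fun i => val (z i) i with hm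
  have hsum : N < ∑ i ∈ C, (m i + 1) := by
    by_contra! hN
    obtain ⟨t, ht⟩ := hmk (fun i => (if i ∈ C then m i + 1 else 0) +
      (Pi.single i1 (N - ∑ i ∈ C, (m i + 1)) : I → ℕ) i) (by
        rw [Finset.sum_add_distrib, Finset.sum_ite_mem, Finset.univ_inter,
          Finset.sum_pi_single']
        simp
        omega)
    obtain ⟨i, hi, hti⟩ := hdom t
    have h1 := hti (z i) (hz i)
    have h2 := ht i
    rw [if_pos hi] at h2
    have h3 : val t i = (t.1 i : ℕ) := rfl
    have h4 : val (z i) i = m i := rfl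
    omega
  rw [Finset.sum_add_distrib, Finset.sum_const, smul_eq_mul, mul_one] at hsum
  have hCc : C.card ≤ Fintype.card I := Finset.card_le_univ C
  have hmx : ∀ x ∈ τ, ∀ i, m i ≤ val x i := fun x hx i => hzmin i x hx
  have hxs : ∀ x : T, ∑ i ∈ C, val x i + ∑ i ∈ Cᶜ, val x i = N := fun x => by
    rw [Finset.sum_add_sum_compl]; exact x.2
  have hin : ∀ x ∈ τ, ∀ i ∈ C, val x i < m i + Fintype.card I := by
    intro x hx i hi
    have h1 := hxs x
    have h2 : ∑ j ∈ C.erase i, m j ≤ ∑ j ∈ C.erase i, val x j :=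
      Finset.sum_le_sum fun j _ => hmx x hx j
    rw [← Finset.add_sum_erase _ _ hi] at h1 hsum
    omega
  have hout : ∀ x ∈ τ, ∀ i ∉ C, val x i < Fintype.card I := by
    intro x hx i hi
    have h1 := hxs x
    have h2 : ∑ j ∈ C, m j ≤ ∑ j ∈ C, val x j := Finset.sum_le_sum fun j _ => hmx x hx j
    have h3 : val x i ≤ ∑ j ∈ Cᶜ, val x j :=
      Finset.single_le_sum (f := val x) (fun _ _ => Nat.zero_le _) (Finset.mem_compl.2 hi)
    omega
  refine ⟨τ.image val, C, ⟨_, Finset.mem_image_of_mem _ hx1⟩, ?_, ?_, ?_, ?_⟩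
  · intro x hx
    obtain ⟨t, ht, rfl⟩ := Finset.mem_image.1 hx
    exact t.2
  · intro i hi
    obtain ⟨x, hx, hc⟩ := hCcol i hi
    exact ⟨_, Finset.mem_image_of_mem _ hx, hc⟩
  · intro x hx
    obtain ⟨t, ht, rfl⟩ := Finset.mem_image.1 hx
    exact hout t ht
  · intro x hx y hy i
    obtain ⟨t, ht, rfl⟩ := Finset.mem_image.1 hx
    obtain ⟨t', ht', rfl⟩ := Finset.mem_image.1 hy
    by_cases hi : i ∈ C
    · have := hin t ht i hi
      have := hmx t' ht' i
      omega
    · have := hout t ht i hi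
      omega

open Filter Topology in
theorem dual_kkm {I : Type*} [Fintype I] [Nonempty I] (A : I → Set (I → ℝ))
    (hA : ∀ i, IsClosed (A i)) (hcov : ∀ x ∈ stdSimplex ℝ I, ∃ i, x ∈ A i) :
    ∃ x ∈ stdSimplex ℝ I, ∀ i, 0 < x i → x ∈ A i := by
  classical
  set K : ℝ := (Fintype.card I : ℝ) with hK
  have step : ∀ N : ℕ, ∃ p ∈ stdSimplex ℝ I, ∀ i, p i ≤ K / (N + 1) ∨
      ∃ q ∈ A i, dist p q ≤ K / (N + 1) := by
    intro N
    have hN : (0 : ℝ) < N + 1 := by positivity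
    let sc : (I → ℕ) → I → ℝ := fun x i => (x i : ℝ) / (N + 1)
    let col : (I → ℕ) → I := fun x =>
      if h : ∃ i, sc x ∈ A i then h.choose else Classical.arbitrary I
    obtain ⟨σ, C, ⟨x, hx⟩, h1, h2, h3, h4⟩ := scarf_grid (I := I) (N + 1) col
    have hΔ : ∀ y ∈ σ, sc y ∈ stdSimplex ℝ I := by
      intro y hy
      refine ⟨fun i => by positivity, ?_⟩
      simp only [sc]
      rw [← Finset.sum_div, ← Nat.cast_sum, h1 y hy]
      push_cast
      exact div_self hN.ne'
    refine ⟨sc x, hΔ x hx, fun i => ?_⟩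
    by_cases hi : i ∈ C
    · right
      obtain ⟨y, hy, hyi⟩ := h2 i hi
      have hex : ∃ i, sc y ∈ A i := hcov _ (hΔ y hy)
      have hmem : sc y ∈ A (col y) := by
        simp only [col, dif_pos hex]
        exact hex.choose_spec
      refine ⟨sc y, hyi ▸ hmem, ?_⟩
      rw [dist_pi_le_iff (by positivity)]
      intro j
      have ha : (x j : ℝ) < y j + K := by rw [hK]; exact_mod_cast h4 x hx y hy j
      have hb : (y j : ℝ) < x j + K := by rw [hK]; exact_mod_cast h4 y hy x hx j
      simp only [sc, Real.dist_eq]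
      rw [← sub_div, abs_div, abs_of_pos hN]
      gcongr
      rw [abs_le]
      constructor <;> linarith
    · left
      have ha : (x i : ℝ) < K := by rw [hK]; exact_mod_cast h3 x hx i hi
      simp only [sc]
      gcongr
  choose p hp hpi using step
  obtain ⟨x, hx, φ, hφ, hlim⟩ := (isCompact_stdSimplex ℝ I).tendsto_subseq hp
  refine ⟨x, hx, fun i hi => ?_⟩
  rw [← (hA i).closure_eq, Metric.mem_closure_iff]
  intro ε hε
  have hz : Tendsto (fun n : ℕ => K / ((φ n : ℝ) + 1)) atTop (𝓝 0) := by
    have h0 : Tendsto (fun n : ℕ => K / ((n : ℝ) + 1)) atTop (𝓝 0) :=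
      by simpa [div_eq_mul_inv] using (tendsto_one_div_add_atTop_nhds_zero_nat (𝕜 := ℝ)).const_mul K
    exact h0.comp hφ.tendsto_atTop
  have e1 : ∀ᶠ n in atTop, K / ((φ n : ℝ) + 1) < ε / 2 := hz.eventually_lt_const (by linarith)
  have e2 : ∀ᶠ n in atTop, K / ((φ n : ℝ) + 1) < x i / 2 := hz.eventually_lt_const (by linarith)
  have e3 : ∀ᶠ n in atTop, dist (p (φ n)) x < ε / 2 :=
    (Metric.tendsto_nhds.1 hlim) _ (by linarith)
  have e4 : ∀ᶠ n in atTop, x i / 2 < p (φ n) i :=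
    ((tendsto_pi_nhds.1 hlim) i).eventually_const_lt (by linarith)
  obtain ⟨n, h1, h2, h3, h4⟩ := (e1.and (e2.and (e3.and e4))).exists
  rcases hpi (φ n) i with h | ⟨q, hq, hd⟩
  · linarith
  · refine ⟨q, hq, ?_⟩
    have := dist_triangle x (p (φ n)) q
    rw [dist_comm x (p (φ n))] at this
    linarith

/-- Kakutani-type fixed point result: the best-reply map
`ζ(x) = argmin_{z ∈ R} ρ(x, z)` has a fixed point. -/
theorem best_reply_fixed_point (n : ℕ) (R : Set (EuclideanSpace ℝ (Fin n)))
    (hne : R.Nonempty) (hconv : Convex ℝ R) (hcomp : IsCompact R)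
    (ρ : EuclideanSpace ℝ (Fin n) → EuclideanSpace ℝ (Fin n) → ℝ)
    (hcont : ∀ y ∈ R, ContinuousOn (fun x => ρ x y) R)
    (hlsc : LowerSemicontinuousOn
      (fun p : EuclideanSpace ℝ (Fin n) × EuclideanSpace ℝ (Fin n) => ρ p.1 p.2)
      (R ×ˢ R))
    (hρconv : ∀ x ∈ R, ConvexOn ℝ R (ρ x)) :
    ∃ xt ∈ R, ∀ w ∈ R, ρ xt xt ≤ ρ xt w := by
  classical
  by_contra! hcon
  have : CompactSpace R := isCompact_iff_compactSpace.1 hcomp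
  let U : R → Set R := fun w => {x | ρ x w < ρ x x}
  have hUo : ∀ w, IsOpen (U w) := by
    intro w
    rw [isOpen_iff_mem_nhds]
    intro x hx
    obtain ⟨r, hr1, hr2⟩ := exists_between (show ρ x w < ρ x x from hx)
    have hc : Continuous fun z : R => ρ z w := continuousOn_iff_continuous_domRestrict.1 (hcont w w.2)
    have h1 : ∀ᶠ z : R in nhds x, ρ z w < r := hc.continuousAt.eventually_lt_const hr1
    have h2 : ∀ᶠ z : R in nhds x, r < ρ z z := by
      have hl := hlsc ((x : EuclideanSpace ℝ (Fin n)), (x : EuclideanSpace ℝ (Fin n)))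
        ⟨x.2, x.2⟩ r hr2
      have ht : Filter.Tendsto (fun z : R => ((z : EuclideanSpace ℝ (Fin n)),
          (z : EuclideanSpace ℝ (Fin n)))) (nhds x)
          (nhdsWithin ((x : EuclideanSpace ℝ (Fin n)), (x : EuclideanSpace ℝ (Fin n)))
            (R ×ˢ R)) := by
        refine tendsto_nhdsWithin_iff.2 ⟨?_, Filter.Eventually.of_forall fun z => ⟨z.2, z.2⟩⟩
        exact (continuous_subtype_val.prodMk continuous_subtype_val).continuousAt
      exact ht.eventually hl
    filter_upwards [h1, h2] with z ha hb
    exact ha.trans hb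
  obtain ⟨t, ht⟩ := isCompact_univ.elim_finite_subcover U hUo (fun x _ => by
    obtain ⟨w, hw, h⟩ := hcon x x.2
    exact Set.mem_iUnion.2 ⟨⟨w, hw⟩, h⟩)
  have hcov : ⋃ i : t, U i = Set.univ := by
    refine Set.eq_univ_of_forall fun x => ?_
    obtain ⟨i, hi, hx⟩ := Set.mem_iUnion₂.1 (ht (Set.mem_univ x))
    exact Set.mem_iUnion.2 ⟨⟨i, hi⟩, hx⟩
  obtain ⟨v, hvcov, hvc, hvU⟩ := exists_iUnion_eq_closed_subset (u := fun i : t => U i)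
    (fun i => hUo i) (fun x => Set.toFinite _) hcov
  have hmemv : ∀ x : R, ∃ i, x ∈ v i := fun x => by
    have : x ∈ ⋃ i, v i := by rw [hvcov]; trivial
    exact Set.mem_iUnion.1 this
  obtain ⟨x0, hx0⟩ := hne
  have : Nonempty t := ⟨(hmemv ⟨x0, hx0⟩).choose⟩
  let F : (t → ℝ) → EuclideanSpace ℝ (Fin n) := fun l => ∑ i, l i • (i.1 : EuclideanSpace ℝ (Fin n))
  have hF : Continuous F := by fun_prop
  have hFR : ∀ l ∈ stdSimplex ℝ t, F l ∈ R := fun l hl =>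
    hconv.sum_mem (fun i _ => hl.1 i) hl.2 (fun i _ => i.1.2)
  obtain ⟨l, hl, hlA⟩ := dual_kkm (fun i : t => F ⁻¹' (Subtype.val '' v i))
    (fun i => (((hvc i).isCompact.image continuous_subtype_val).isClosed).preimage hF)
    (fun l hl => by
      obtain ⟨i, hi⟩ := hmemv ⟨F l, hFR l hl⟩
      exact ⟨i, ⟨_, hi, rfl⟩⟩)
  have hlt : ∀ i, 0 < l i → ρ (F l) i.1 < ρ (F l) (F l) := by
    intro i hi
    obtain ⟨y, hy, hyF⟩ := hlA i hi
    have := hvU i hy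
    rw [← hyF]
    exact this
  have hJ : ρ (F l) (F l) ≤ ∑ i, l i • ρ (F l) i.1 :=
    (hρconv (F l) (hFR l hl)).map_sum_le (fun i _ => hl.1 i) hl.2 (fun i _ => i.1.2)
  have hle : ∀ i, l i • ρ (F l) i.1 ≤ l i * ρ (F l) (F l) := by
    intro i
    rcases (hl.1 i).eq_or_lt with h | h
    · simp [← h]
    · exact mul_le_mul_of_nonneg_left (hlt i h).le h.le
  obtain ⟨k, hk⟩ : ∃ k, 0 < l k := by
    by_contra! h
    have h1 : ∑ i, l i ≤ 0 := Finset.sum_nonpos fun i _ => h i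
    rw [hl.2] at h1
    linarith
  have : ∑ i, l i • ρ (F l) i.1 < ∑ i, l i * ρ (F l) (F l) :=
    Finset.sum_lt_sum (fun i _ => hle i)
      ⟨k, Finset.mem_univ _, mul_lt_mul_of_pos_left (hlt k hk) hk⟩
  rw [← Finset.sum_mul, hl.2, one_mul] at this
  linarith
end

section
/- Under the assumptions of the nonconvex sum-aggregative game Γ (action sets X_i ⊆ R^d compact with diameter ≤ Δ, costs f_i(x) = θ_i(x_i, (1/n) Σ_j A_j x_j) with ||A_j||_2 ≤ M, θ_i lower semicontinuous in x_i and (H, γ)-Hölder in the aggregate), Γ admits an additively ε-pure Nash equilibrium with ε = 2H((√q + 1) M Δ / n)^γ, where q is the dimension of the aggregate space. -/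
open scoped BigOperators

theorem sf_aux {E : Type} [NormedAddCommGroup E] [InnerProductSpace ℝ E] [FiniteDimensional ℝ E]
    {n : ℕ} (hn : 0 < n) (S : Fin n → Set E) (z : Fin n → E)
    (hz : ∀ i, z i ∈ convexHull ℝ (S i)) :
    ∃ z' : Fin n → E, ∑ i, z' i = ∑ i, z i ∧ (∀ i, z' i ∈ convexHull ℝ (S i)) ∧
      ∃ b : Finset (Fin n), b.card ≤ Module.finrank ℝ E ∧ ∀ i, i ∉ b → z' i ∈ S i := by
  classical
  have hn0 : (n : ℝ) ≠ 0 := by positivity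
  let T : Set (E × (Fin n → ℝ)) := {p | ∃ i, p.1 ∈ S i ∧ p.2 = Pi.single i 1}
  have h1 : ∀ i, ((z i, Pi.single i 1) : E × (Fin n → ℝ)) ∈ convexHull ℝ T := by
    intro i
    have h2 : ((z i, Pi.single i 1) : E × (Fin n → ℝ)) ∈
        convexHull ℝ (S i) ×ˢ convexHull ℝ {(Pi.single i 1 : Fin n → ℝ)} :=
      ⟨hz i, by simp⟩
    rw [← convexHull_prod] at h2
    refine convexHull_mono ?_ h2
    rintro ⟨a, b⟩ ⟨ha, hb⟩
    exact ⟨i, ha, by simpa using hb⟩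
  have h2 : ∑ i, (n : ℝ)⁻¹ • ((z i, Pi.single i 1) : E × (Fin n → ℝ)) ∈ convexHull ℝ T := by
    apply (convex_convexHull ℝ T).sum_mem
    · intro i _; positivity
    · simp [hn0]
    · intro i _; exact h1 i
  obtain ⟨κ, _, p, w, hpT, hp, hw, hw1, hwp⟩ := eq_pos_convex_span_of_mem_convexHull h2
  have hT : ∀ k, p k ∈ T := fun k => hpT ⟨k, rfl⟩
  choose c hc1 hc2 using hT
  have e1 : ∑ k, w k • (p k).1 = (n : ℝ)⁻¹ • ∑ i, z i := by
    have := congrArg Prod.fst hwp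
    simpa [Prod.fst_sum, Finset.smul_sum] using this
  have e2 : ∀ i, ∑ k with c k = i, w k = (n : ℝ)⁻¹ := by
    intro i
    have := congrFun (congrArg Prod.snd hwp) i
    simp only [Prod.snd_sum, Prod.smul_snd, Finset.sum_apply, Pi.smul_apply, hc2, Pi.single_apply,
      smul_eq_mul] at this
    simpa [Finset.sum_filter, eq_comm] using this
  have hlin : LinearIndependent ℝ p := by
    rw [Fintype.linearIndependent_iff]
    intro g hg
    have hg2 : ∑ k, g k = 0 := by
      have h3 := congrArg (fun v : E × (Fin n → ℝ) => ∑ i, v.2 i) hg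
      simp only [Prod.snd_sum, Prod.smul_snd, Finset.sum_apply, Pi.smul_apply, hc2,
        Pi.single_apply, smul_eq_mul] at h3
      rw [Finset.sum_comm] at h3
      simpa using h3
    have := (affineIndependent_iff.1 hp) Finset.univ g hg2 hg
    intro i; exact this i (Finset.mem_univ i)
  have hcard : Fintype.card κ ≤ Module.finrank ℝ E + n := by
    have := hlin.fintype_card_le_finrank
    simpa using this
  have hsum : ∑ i, ({k | c k = i} : Finset κ).card = Fintype.card κ := by
    have := Finset.card_eq_sum_card_fiberwise (s := (Finset.univ : Finset κ)) (t := Finset.univ)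
      (f := c) (by intro x _; simp)
    rw [← Finset.card_univ, this]
  have hne : ∀ i, 1 ≤ ({k | c k = i} : Finset κ).card := by
    intro i
    rw [Nat.one_le_iff_ne_zero, Finset.card_ne_zero]
    by_contra h
    rw [Finset.not_nonempty_iff_eq_empty] at h
    have := e2 i
    rw [h] at this
    simp at this
    exact hn0 this.symm
  refine ⟨fun i => ∑ k with c k = i, ((n : ℝ) * w k) • (p k).1, ?_, ?_,
    ({i | 1 < ({k | c k = i} : Finset κ).card} : Finset (Fin n)), ?_, ?_⟩
  · rw [Finset.sum_fiberwise]
    simp only [mul_smul]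
    rw [← Finset.smul_sum, e1, smul_smul, mul_inv_cancel₀ hn0, one_smul]
  · intro i
    apply (convex_convexHull ℝ (S i)).sum_mem
    · intro k _; have := hw k; positivity
    · rw [← Finset.mul_sum, e2, mul_inv_cancel₀ hn0]
    · intro k hk
      apply subset_convexHull
      have := hc1 k
      simp at hk
      rwa [hk] at this
  · have h4 : ∑ i, (1 + if 1 < ({k | c k = i} : Finset κ).card then 1 else 0) ≤
        ∑ i, ({k | c k = i} : Finset κ).card := by
      apply Finset.sum_le_sum
      intro i _
      have := hne i
      split_ifs <;> omega
    rw [Finset.sum_add_distrib, hsum] at h4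
    rw [Finset.card_filter]
    simp at h4 ⊢
    omega
  · intro i hi
    simp only [Finset.mem_filter, Finset.mem_univ, true_and, not_lt] at hi
    have h5 : ({k | c k = i} : Finset κ).card = 1 := le_antisymm hi (hne i)
    obtain ⟨k, hk⟩ := Finset.card_eq_one.1 h5
    have h6 := e2 i
    rw [hk, Finset.sum_singleton] at h6
    have h7 : c k = i := by
      have : k ∈ ({k | c k = i} : Finset κ) := by rw [hk]; simp
      simpa using this
    show ∑ k with c k = i, ((n : ℝ) * w k) • (p k).1 ∈ S i
    rw [hk, Finset.sum_singleton, h6, mul_inv_cancel₀ hn0, one_smul, ← h7]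
    exact hc1 k

theorem starr_round {E : Type} [NormedAddCommGroup E] [InnerProductSpace ℝ E]
    {ι : Type} (b : Finset ι) (S : ι → Set E) (z : ι → E) (D : ℝ)
    (hD : ∀ i, ∀ a ∈ S i, ∀ a' ∈ S i, ‖a - a'‖ ≤ D)
    (hz : ∀ i, z i ∈ convexHull ℝ (S i)) :
    ∃ s : ι → E, (∀ i, s i ∈ S i) ∧ ‖∑ i ∈ b, (s i - z i)‖ ^ 2 ≤ b.card * D ^ 2 := by
  classical
  induction b using Finset.induction_on with
  | empty =>
    have : ∀ i, (S i).Nonempty := fun i => convexHull_nonempty_iff.1 ⟨z i, hz i⟩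
    choose s hs using this
    exact ⟨s, hs, by simp⟩
  | insert j b hj ih =>
    obtain ⟨s, hs, hb⟩ := ih
    set e := ∑ i ∈ b, (s i - z i) with he
    have h1 : ∃ a ∈ S j, inner ℝ e (a - z j) ≤ 0 := by
      by_contra hcon
      push Not at hcon
      have hconv : Convex ℝ {a : E | 0 < inner ℝ e (a - z j)} := by
        have : {a : E | 0 < inner ℝ e (a - z j)} = {a : E | inner ℝ e (z j) < (innerSL ℝ e) a} := by
          ext a; simp [inner_sub_right]
        rw [this]
        exact convex_halfSpace_gt (innerSL ℝ e).isLinear _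
      have h2 : z j ∈ {a : E | 0 < inner ℝ e (a - z j)} :=
        convexHull_min (s := S j) (fun a ha => hcon a ha) hconv (hz j)
      rw [Set.mem_setOf_eq, sub_self, inner_zero_right] at h2
      exact lt_irrefl _ h2
    obtain ⟨a, ha, hia⟩ := h1
    have hn : ‖a - z j‖ ≤ D := by
      have : z j ∈ Metric.closedBall a D := by
        refine convexHull_min ?_ (convex_closedBall a D) (hz j)
        intro a' ha'
        rw [mem_closedBall_iff_norm]
        exact hD j a' ha' a ha
      rwa [mem_closedBall_iff_norm'] at this
    refine ⟨Function.update s j a, ?_, ?_⟩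
    · intro i
      by_cases h : i = j
      · subst h; simpa using ha
      · simpa [h] using hs i
    · rw [Finset.sum_insert hj, Finset.card_insert_of_notMem hj]
      have : ∑ i ∈ b, (Function.update s j a i - z i) = e := by
        apply Finset.sum_congr rfl
        intro i hi
        have : i ≠ j := fun h => hj (h ▸ hi)
        simp [this]
      rw [this, Function.update_self, add_comm, norm_add_sq_real]
      have h3 : ‖a - z j‖ ^ 2 ≤ D ^ 2 := pow_le_pow_left₀ (norm_nonneg _) hn 2
      push_cast
      nlinarith

theorem starr {E : Type} [NormedAddCommGroup E] [InnerProductSpace ℝ E] [FiniteDimensional ℝ E]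
    {n : ℕ} (hn : 0 < n) (S : Fin n → Set E) (z : Fin n → E) (D : ℝ) (hD0 : 0 ≤ D)
    (hD : ∀ i, ∀ a ∈ S i, ∀ a' ∈ S i, ‖a - a'‖ ≤ D)
    (hz : ∀ i, z i ∈ convexHull ℝ (S i)) :
    ∃ s : Fin n → E, (∀ i, s i ∈ S i) ∧
      ‖∑ i, s i - ∑ i, z i‖ ≤ Real.sqrt (Module.finrank ℝ E) * D := by
  classical
  obtain ⟨z', h1, h2, b, hb, h3⟩ := sf_aux hn S z hz
  obtain ⟨s, hs, hsb⟩ := starr_round b S z' D hD h2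
  refine ⟨fun i => if i ∈ b then s i else z' i, ?_, ?_⟩
  · intro i
    by_cases h : i ∈ b
    · simpa [h] using hs i
    · simpa [h] using h3 i h
  · rw [← h1, ← Finset.sum_sub_distrib]
    have : ∑ i, ((if i ∈ b then s i else z' i) - z' i) = ∑ i ∈ b, (s i - z' i) := by
      rw [← Finset.sum_subset (Finset.subset_univ b)]
      · apply Finset.sum_congr rfl
        intro i hi; simp [hi]
      · intro i _ hi; simp [hi]
    rw [this]
    refine (sq_le_sq₀ (norm_nonneg _) (by positivity)).1 ?_
    rw [mul_pow, Real.sq_sqrt (by positivity)]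
    refine hsb.trans ?_
    have : (b.card : ℝ) ≤ Module.finrank ℝ E := by exact_mod_cast hb
    gcongr

open MeasureTheory

theorem det_interp {E : Type} [NormedAddCommGroup E] [InnerProductSpace ℝ E]
    [FiniteDimensional ℝ E] (A : E →L[ℝ] E) :
    ∃ P : Polynomial ℝ, P.natDegree ≤ Module.finrank ℝ E ∧
      ∀ t : ℝ, P.eval t = (1 + t • A).det := by
  classical
  let b := Module.finBasis ℝ E
  let m := LinearMap.toMatrix b b (A : E →ₗ[ℝ] E)
  refine ⟨((Polynomial.X : Polynomial ℝ) • m.map Polynomial.C +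
    (1 : Matrix _ _ ℝ).map Polynomial.C).det, ?_, ?_⟩
  · simpa using Polynomial.natDegree_det_X_add_C_le m 1
  · intro t
    have h1 : (1 + t • A).det = (1 + t • m).det := by
      rw [ContinuousLinearMap.det, ← LinearMap.det_toMatrix b]
      congr 1
      have : (((1 + t • A : E →L[ℝ] E)) : E →ₗ[ℝ] E) = LinearMap.id + t • (A : E →ₗ[ℝ] E) := rfl
      rw [this, map_add, map_smul, LinearMap.toMatrix_id]
    rw [h1, ← Polynomial.coe_evalRingHom, RingHom.map_det]
    congr 1
    ext i j
    by_cases hij : i = j <;> simp [Matrix.one_apply, hij] <;> ring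

/-- The Milnor-Rogers volume identity. -/
theorem rogers {E : Type} [NormedAddCommGroup E] [InnerProductSpace ℝ E]
    [FiniteDimensional ℝ E] [MeasurableSpace E] [BorelSpace E] (μ : Measure E)
    [μ.IsAddHaarMeasure] (R : ℝ) (hR : 0 < R) (h : E → E) (h' : E → E →L[ℝ] E)
    (hd : ∀ x ∈ Metric.closedBall (0 : E) R, HasFDerivWithinAt h (h' x) (Metric.closedBall 0 R) x)
    (hc : ContinuousOn h' (Metric.closedBall 0 R))
    (hz : ∀ x, ‖x‖ = R → h x = 0) :
    ∫ x in Metric.closedBall (0 : E) R, (1 + h' x).det ∂μ = μ.real (Metric.closedBall 0 R) := by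
  classical
  set B := Metric.closedBall (0 : E) R with hB
  have hBc : IsCompact B := isCompact_closedBall 0 R
  obtain ⟨C, hC⟩ := hBc.exists_bound_of_continuousOn hc
  obtain ⟨L, hL0, hL⟩ : ∃ L : NNReal, 0 < L ∧ ∀ x ∈ B, ‖h' x‖₊ ≤ L := by
    refine ⟨Real.toNNReal (max C 1), by simp, ?_⟩
    intro x hx
    rw [← NNReal.coe_le_coe, Real.coe_toNNReal _ (by positivity)]
    exact (hC x hx).trans (le_max_left _ _)
  have hlip : LipschitzOnWith L h B :=
    (convex_closedBall 0 R).lipschitzOnWith_of_nnnorm_hasFDerivWithin_le hd hL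
  -- extension by zero
  let g : E → E := fun x => if x ∈ B then h x else 0
  have hmix : ∀ x ∈ B, ∀ y, y ∉ B → ‖h x‖ ≤ L * ‖x - y‖ := by
    intro x hx y hy
    have hx' : ‖x‖ ≤ R := by simpa [hB] using hx
    have hy' : R < ‖y‖ := by simpa [hB] using hy
    have hcont : ContinuousOn (fun t : ℝ => ‖x + t • (y - x)‖) (Set.Icc 0 1) := by fun_prop
    have := intermediate_value_Icc (zero_le_one) hcont
    obtain ⟨t, ht, hte⟩ := this (show R ∈ Set.Icc _ _ by simpa using ⟨hx', hy'.le⟩)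
    simp only at hte
    have hzB : x + t • (y - x) ∈ B := by simp [hB, hte]
    have h1 := hlip.norm_sub_le hx hzB
    rw [hz _ hte, sub_zero] at h1
    refine h1.trans ?_
    gcongr
    have : x - (x + t • (y - x)) = t • (x - y) := by module
    rw [this, norm_smul, Real.norm_of_nonneg ht.1]
    exact mul_le_of_le_one_left (norm_nonneg _) ht.2
  have hg : LipschitzWith L g := by
    apply LipschitzWith.of_dist_le_mul
    intro x y
    rw [dist_eq_norm, dist_eq_norm]
    by_cases hx : x ∈ B <;> by_cases hy : y ∈ B
    · simpa [g, hx, hy] using hlip.norm_sub_le hx hy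
    · simpa [g, hx, hy] using hmix x hx y hy
    · have := hmix y hy x hx
      rw [norm_sub_rev] at this
      simpa [g, hx, hy] using this
    · simp [g, hx, hy]; positivity
  -- positivity of determinants
  obtain ⟨δ, hδ, hdet⟩ : ∃ δ > 0, ∀ A : E →L[ℝ] E, ‖A‖ < δ → 0 < (1 + A).det := by
    have hcd : Continuous (fun A : E →L[ℝ] E => (1 + A).det) := by
      exact ContinuousLinearMap.continuous_det.comp (continuous_const.add continuous_id)
    have h0 : (0 : ℝ) < (1 + (0 : E →L[ℝ] E)).det := by
      simp [ContinuousLinearMap.det]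
    have := (hcd.tendsto 0).eventually (lt_mem_nhds h0)
    obtain ⟨δ, hδ, H⟩ := Metric.eventually_nhds_iff.1 this
    exact ⟨δ, hδ, fun A hA => H (by simpa using hA)⟩
  have hBm : MeasurableSet B := hBc.measurableSet
  have hsmall : ∀ t : ℝ, 0 ≤ t → t * L < 1 → t * L < δ →
      ∫ x in B, (1 + t • h' x).det ∂μ = μ.real B := by
    intro t ht0 ht1 htδ
    let F : E → E := fun x => x + t • g x
    have hap : ApproximatesLinearOn F ((ContinuousLinearEquiv.refl ℝ E : E ≃L[ℝ] E) : E →L[ℝ] E)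
        Set.univ (t.toNNReal * L) := by
      rw [ApproximatesLinearOn.approximatesLinearOn_iff_lipschitzOnWith, lipschitzOnWith_univ]
      apply LipschitzWith.of_dist_le_mul
      intro x y
      have := hg.dist_le_mul x y
      rw [dist_eq_norm] at this ⊢
      have e : (F - ((ContinuousLinearEquiv.refl ℝ E : E ≃L[ℝ] E) : E →L[ℝ] E)) x -
        (F - ((ContinuousLinearEquiv.refl ℝ E : E ≃L[ℝ] E) : E →L[ℝ] E)) y = t • (g x - g y) := by
        simp [F, smul_sub]
      rw [e, norm_smul, Real.norm_of_nonneg ht0]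
      rw [NNReal.coe_mul, Real.coe_toNNReal _ ht0, mul_assoc]
      exact mul_le_mul_of_nonneg_left this ht0
    have hcc : Subsingleton E ∨ (t.toNNReal * L : NNReal) <
        ‖((ContinuousLinearEquiv.refl ℝ E).symm : E →L[ℝ] E)‖₊⁻¹ := by
      rcases subsingleton_or_nontrivial E with hE | hE
      · exact Or.inl hE
      · right
        have : ‖((ContinuousLinearEquiv.refl ℝ E).symm : E →L[ℝ] E)‖₊ = 1 := by
          have : ((ContinuousLinearEquiv.refl ℝ E).symm : E →L[ℝ] E) = 1 := rfl
          rw [this, nnnorm_one]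
        rw [this, inv_one, ← NNReal.coe_lt_coe]
        rw [NNReal.coe_mul, Real.coe_toNNReal _ ht0]
        exact ht1
    have hinj : Function.Injective F := Set.injOn_univ.1 (hap.injOn hcc)
    have hsurj : Function.Surjective F := hap.surjective hcc
    have himc : F '' Bᶜ = Bᶜ := by
      have : Set.EqOn F id Bᶜ := by
        intro x hx
        have hx' : x ∉ B := hx
        simp [F, g, hx']
      rw [this.image_eq, Set.image_id]
    have him : F '' B = B := by
      have := Set.image_compl_eq (s := B) ⟨hinj, hsurj⟩
      rw [himc] at this
      exact (compl_injective this).symm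
    have hFd : ∀ x ∈ B, HasFDerivWithinAt F (1 + t • h' x) B x := by
      intro x hx
      have h1 : HasFDerivWithinAt (fun x => x + t • h x) (1 + t • h' x) B x :=
        (hasFDerivWithinAt_id x B).add ((hd x hx).const_smul t)
      refine h1.congr ?_ ?_
      · intro y hy; simp [F, g, hy]
      · simp [F, g, hx]
    have key := integral_image_eq_integral_abs_det_fderiv_smul μ hBm hFd hinj.injOn
      (fun _ => (1 : ℝ))
    rw [him] at key
    simp only [integral_const, smul_eq_mul, mul_one, measureReal_restrict_apply_univ] at key
    rw [key]
    apply setIntegral_congr_fun hBm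
    intro x hx
    refine (abs_of_pos (hdet _ ?_)).symm
    rw [norm_smul, Real.norm_of_nonneg ht0]
    refine lt_of_le_of_lt ?_ htδ
    gcongr
    exact hL x hx
  -- interpolation
  set N := Module.finrank ℝ E + 1 with hN
  obtain ⟨τ, hτ0, hτ1, hτδ⟩ : ∃ τ : ℝ, 0 < τ ∧ N * τ * L < 1 ∧ N * τ * L < δ := by
    have hLp : (0 : ℝ) < L := hL0
    have hNp : (0 : ℝ) < N := by positivity
    refine ⟨min 1 δ / (2 * N * L), by positivity, ?_⟩
    have : N * (min 1 δ / (2 * N * L)) * L = min 1 δ / 2 := by field_simp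
    rw [this]
    have hm : 0 < min 1 δ := by positivity
    have := min_le_left 1 δ
    have := min_le_right 1 δ
    constructor <;> linarith
  let v : ℕ → ℝ := fun k => k * τ
  let s := Finset.range N
  have hv : Set.InjOn v s := by
    intro a _ b _ hab
    have : (a : ℝ) = b := mul_right_cancel₀ hτ0.ne' hab
    exact_mod_cast this
  have hvs : ∀ k ∈ s, ∫ x in B, (1 + v k • h' x).det ∂μ = μ.real B := by
    intro k hk
    have hk' : (k : ℝ) ≤ N := by
      have := Finset.mem_range.1 hk
      exact_mod_cast this.le
    have hle : v k * L ≤ N * τ * L := by simp only [v]; gcongr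
    exact hsmall _ (by positivity) (hle.trans_lt hτ1) (hle.trans_lt hτδ)
  have hint : ∀ t : ℝ, IntegrableOn (fun x => (1 + t • h' x).det) B μ := by
    intro t
    apply ContinuousOn.integrableOn_compact hBc
    exact ContinuousLinearMap.continuous_det.comp_continuousOn
      (continuousOn_const.add (hc.const_smul t))
  have hpt : ∀ x, (1 + h' x).det = ∑ k ∈ s, (1 + v k • h' x).det *
      (Lagrange.basis s v k).eval 1 := by
    intro x
    obtain ⟨P, hP, hPe⟩ := det_interp (h' x)
    have hdeg : P.degree < s.card := by
      refine lt_of_le_of_lt Polynomial.degree_le_natDegree ?_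
      simp only [s, Finset.card_range, hN]
      exact_mod_cast Nat.lt_succ_of_le hP
    have h1 := Lagrange.eq_interpolate hv hdeg
    have h2 := hPe 1
    rw [one_smul] at h2
    rw [← h2]
    conv_lhs => rw [h1]
    rw [Lagrange.interpolate_apply, Polynomial.eval_finsetSum]
    apply Finset.sum_congr rfl
    intro k _
    rw [Polynomial.eval_mul, Polynomial.eval_C, hPe]
  have hone : ∑ k ∈ s, (Lagrange.basis s v k).eval 1 = 1 := by
    rw [← Polynomial.eval_finsetSum, Lagrange.sum_basis hv ⟨0, by simp [s, hN]⟩]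
    simp
  simp_rw [hpt]
  rw [integral_finsetSum]
  · simp_rw [integral_mul_const]
    rw [Finset.sum_congr rfl (fun k hk => by rw [hvs k hk]), ← Finset.mul_sum, hone, mul_one]
  · intro k _
    exact (hint _).mul_const _

theorem brouwer_smooth {E : Type} [NormedAddCommGroup E] [InnerProductSpace ℝ E]
    [FiniteDimensional ℝ E] [MeasurableSpace E] [BorelSpace E] (μ : Measure E)
    [μ.IsAddHaarMeasure] (G : E → E) (hG : ContDiff ℝ 1 G) (K : ℝ) (hK : ∀ x, ‖G x‖ ≤ K) :
    ∃ x, G x = x := by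
  classical
  by_contra hcon
  push Not at hcon
  have hK0 : 0 ≤ K := (norm_nonneg _).trans (hK 0)
  obtain ⟨R, hR, hKR⟩ : ∃ R : ℝ, 0 < R ∧ K < R := ⟨K + 1, by linarith, by linarith⟩
  let u : E → E := fun x => x - G x
  have hu : ∀ x, 0 < ‖u x‖ ^ 2 := fun x => by
    have : u x ≠ 0 := sub_ne_zero.2 (hcon x).symm
    positivity
  have hus : ContDiff ℝ 1 u := contDiff_id.sub hG
  let di : E → ℝ := fun x => (inner ℝ x (u x)) ^ 2 + ‖u x‖ ^ 2 * (R ^ 2 - ‖x‖ ^ 2)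
  have hdi : ContDiff ℝ 1 di :=
    ((contDiff_id.inner ℝ hus).pow 2).add
      ((hus.norm_sq ℝ).mul (contDiff_const.sub (contDiff_id.norm_sq ℝ)))
  let U : Set E := {x | 0 < di x}
  have hU : IsOpen U := isOpen_lt continuous_const hdi.continuous
  let B := Metric.closedBall (0 : E) R
  have hsp : ∀ x, ‖x‖ = R → 0 < inner ℝ x (u x) := by
    intro x hx
    have h1 : inner ℝ x (u x) = R ^ 2 - inner ℝ x (G x) := by
      simp [u, inner_sub_right, hx]
    have h2 : inner ℝ x (G x) ≤ R * K :=
      (real_inner_le_norm _ _).trans (by rw [hx]; gcongr; exact hK x)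
    rw [h1]; nlinarith
  have hBU : B ⊆ U := by
    intro x hx
    have hx' : ‖x‖ ≤ R := by simpa [B] using hx
    show 0 < di x
    rcases hx'.lt_or_eq with h | h
    · have h1 : 0 < R ^ 2 - ‖x‖ ^ 2 := by nlinarith [norm_nonneg x]
      have := mul_pos (hu x) h1
      simp only [di]; positivity
    · have := hsp x h
      simp only [di, h]; simp; positivity
  let σ : E → ℝ := fun x => (-(inner ℝ x (u x)) + Real.sqrt (di x)) / ‖u x‖ ^ 2
  let r : E → E := fun x => x + σ x • u x
  have hrs : ContDiffOn ℝ 1 r U := by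
    have h1 : ContDiffOn ℝ 1 (fun x => Real.sqrt (di x)) U :=
      hdi.contDiffOn.sqrt (fun x hx => ne_of_gt hx)
    have h2 : ContDiffOn ℝ 1 σ U :=
      ((contDiff_id.inner ℝ hus).contDiffOn.neg.add h1).div (hus.norm_sq ℝ).contDiffOn
        (fun x _ => (hu x).ne')
    exact contDiffOn_id.add (h2.smul hus.contDiffOn)
  have hrn : ∀ x ∈ U, inner ℝ (r x) (r x) = R ^ 2 := by
    intro x hx
    have hsq : Real.sqrt (di x) ^ 2 = di x := Real.sq_sqrt (le_of_lt hx)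
    have h1 : σ x * ‖u x‖ ^ 2 + inner ℝ x (u x) = Real.sqrt (di x) := by
      simp only [σ]; rw [div_mul_cancel₀ _ (hu x).ne']; ring
    have h2 : (σ x * ‖u x‖ ^ 2 + inner ℝ x (u x)) ^ 2 = di x := by rw [h1, hsq]
    simp only [r, real_inner_self_eq_norm_sq]
    rw [norm_add_sq_real, norm_smul, mul_pow, inner_smul_right, Real.norm_eq_abs, sq_abs]
    simp only [di] at h2
    have := (hu x).ne'
    apply mul_left_cancel₀ this
    linear_combination h2
  have hrz : ∀ x, ‖x‖ = R → r x - x = 0 := by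
    intro x hx
    have h1 : di x = (inner ℝ x (u x)) ^ 2 := by simp [di, hx]
    have h2 : σ x = 0 := by
      simp only [σ]; rw [h1, Real.sqrt_sq (hsp x hx).le]; simp
    simp [r, h2]
  have hrd : ∀ x ∈ U, HasFDerivAt r (fderiv ℝ r x) x := fun x hx =>
    ((hrs.differentiableOn one_ne_zero).differentiableAt (hU.mem_nhds hx)).hasFDerivAt
  have hrc : ContinuousOn (fderiv ℝ r) U := hrs.continuousOn_fderiv_of_isOpen hU le_rfl
  have key := rogers μ R hR (fun x => r x - x) (fun x => fderiv ℝ r x - 1)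
    (fun x hx => ((hrd x (hBU hx)).sub (hasFDerivAt_id x)).hasFDerivWithinAt)
    ((hrc.mono hBU).sub continuousOn_const) hrz
  have hzero : ∀ x ∈ B, (1 + (fderiv ℝ r x - 1)).det = 0 := by
    intro x hx
    rw [add_sub_cancel]
    by_contra hne
    have h1 : HasFDerivAt (fun y => inner ℝ (r y) (r y)) _ x :=
      (hrd x (hBU hx)).inner ℝ (hrd x (hBU hx))
    have h2 : HasFDerivAt (fun y => inner ℝ (r y) (r y)) (0 : E →L[ℝ] ℝ) x := by
      refine (hasFDerivAt_const (R ^ 2) x).congr_of_eventuallyEq ?_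
      filter_upwards [hU.mem_nhds (hBU hx)] with y hy using hrn y hy
    have h3 := h1.unique h2
    have hsurj : ∃ w, fderiv ℝ r x w = r x := by
      have hun : IsUnit (LinearMap.det (fderiv ℝ r x : E →ₗ[ℝ] E)) := isUnit_iff_ne_zero.2 hne
      have := (LinearMap.equivOfIsUnitDet hun).surjective (r x)
      simpa using this
    obtain ⟨w, hw⟩ := hsurj
    have h4 := congrArg (fun l => l w) h3
    simp [hw] at h4
    have h5 := hrn x (hBU hx)
    rw [h4] at h5
    rw [inner_zero_right] at h5
    exact (pow_pos hR 2).ne h5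
  rw [setIntegral_congr_fun (measurableSet_closedBall) (g := fun _ => (0 : ℝ)) hzero] at key
  simp at key
  have hpos : 0 < μ.real (Metric.closedBall (0 : E) R) :=
    ENNReal.toReal_pos (Metric.measure_closedBall_pos μ 0 hR).ne'
      (isCompact_closedBall 0 R).measure_lt_top.ne
  exact hpos.ne key

theorem approx_equilibrium (n q d : ℕ) (hn : 0 < n) (M H γ η : ℝ)
    (hM : 0 < M) (hH : 0 < H) (hγ : 0 < γ) (hη : 0 < η)
    (X : Fin n → Set (EuclideanSpace ℝ (Fin d)))
    (hXne : ∀ i, (X i).Nonempty)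
    (hXcp : ∀ i, IsCompact (X i))
    (A : Fin n → EuclideanSpace ℝ (Fin d) →L[ℝ] EuclideanSpace ℝ (Fin q))
    (hA : ∀ i, ‖A i‖ ≤ M)
    (θ : Fin n → EuclideanSpace ℝ (Fin d) → EuclideanSpace ℝ (Fin q) → ℝ)
    (hlsc : ∀ i y, LowerSemicontinuousOn (fun xi => θ i xi y) (X i))
    (hHolder : ∀ i xi y y', |θ i xi y' - θ i xi y| ≤ H * ‖y' - y‖ ^ γ) :
    ∃ (y : EuclideanSpace ℝ (Fin q)) (z : Fin n → EuclideanSpace ℝ (Fin q)),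
      (∀ i, z i ∈ convexHull ℝ (A i '' {x | x ∈ X i ∧ ∀ x' ∈ X i, θ i x y ≤ θ i x' y + η})) ∧
      y = (n : ℝ)⁻¹ • ∑ i, z i := by
  classical
  have hn0 : (n : ℝ) ≠ 0 := by positivity
  let S : Fin n → EuclideanSpace ℝ (Fin q) → Set (EuclideanSpace ℝ (Fin q)) := fun i y =>
    convexHull ℝ (A i '' {x | x ∈ X i ∧ ∀ x' ∈ X i, θ i x y ≤ θ i x' y + η})
  let t : EuclideanSpace ℝ (Fin q) → Set (EuclideanSpace ℝ (Fin q)) := fun y =>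
    {v | ∃ z : Fin n → EuclideanSpace ℝ (Fin q), (∀ i, z i ∈ S i y) ∧
      v = (n : ℝ)⁻¹ • ∑ i, z i}
  have htc : ∀ y, Convex ℝ (t y) := by
    rintro y _ ⟨z, hz, rfl⟩ _ ⟨z', hz', rfl⟩ a b ha hb hab
    refine ⟨fun i => a • z i + b • z' i, fun i => ?_, ?_⟩
    · exact convex_convexHull ℝ _ (hz i) (hz' i) ha hb hab
    · rw [Finset.sum_add_distrib, ← Finset.smul_sum, ← Finset.smul_sum, smul_add,
        smul_comm, smul_comm b]
  have hloc : ∀ y, ∃ c, ∀ᶠ y' in nhds y, c ∈ t y' := by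
    intro y
    have hmin : ∀ i, ∃ a ∈ X i, IsMinOn (fun xi => θ i xi y) (X i) a := fun i =>
      (hlsc i y).exists_isMinOn (hXne i) (hXcp i)
    choose a ha hamin using hmin
    refine ⟨(n : ℝ)⁻¹ • ∑ i, A i (a i), ?_⟩
    have hcont : Continuous (fun y' : EuclideanSpace ℝ (Fin q) => 2 * (H * ‖y' - y‖ ^ γ)) := by
      have h1 : Continuous (fun y' : EuclideanSpace ℝ (Fin q) => ‖y' - y‖) := by fun_prop
      have := h1.rpow_const (p := γ) (fun _ => Or.inr hγ.le)
      fun_prop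
    have h0 : 2 * (H * ‖y - y‖ ^ γ) < η := by
      simp [Real.zero_rpow hγ.ne', hη]
    filter_upwards [(hcont.tendsto y).eventually (gt_mem_nhds h0)] with y' hy'
    refine ⟨fun i => A i (a i), fun i => subset_convexHull ℝ _ ⟨a i, ⟨ha i, ?_⟩, rfl⟩, rfl⟩
    intro x' hx'
    have h1 := abs_le.1 (hHolder i (a i) y y')
    have h2 := abs_le.1 (hHolder i x' y y')
    have h3 : θ i (a i) y ≤ θ i x' y := hamin i hx'
    linarith [h1.2, h2.1]
  have hbd : ∃ C, 0 ≤ C ∧ ∀ i, ∀ x ∈ X i, ‖x‖ ≤ C := by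
    have : ∀ i, ∃ C, ∀ x ∈ X i, ‖x‖ ≤ C := fun i => (hXcp i).isBounded.exists_norm_le
    choose C hC using this
    have hC0 : ∀ i, 0 ≤ C i := fun i => by
      obtain ⟨x, hx⟩ := hXne i
      exact (norm_nonneg x).trans (hC i x hx)
    refine ⟨∑ i, C i, Finset.sum_nonneg fun i _ => hC0 i, fun i x hx => (hC i x hx).trans ?_⟩
    exact Finset.single_le_sum (fun i _ => hC0 i) (Finset.mem_univ i)
  obtain ⟨C, hC0, hC⟩ := hbd
  have htb : ∀ y, ∀ v ∈ t y, ‖v‖ ≤ M * C := by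
    rintro y _ ⟨z, hz, rfl⟩
    have hzi : ∀ i, ‖z i‖ ≤ M * C := by
      intro i
      have : S i y ⊆ Metric.closedBall 0 (M * C) := by
        refine convexHull_min ?_ (convex_closedBall _ _)
        rintro _ ⟨x, hx, rfl⟩
        rw [mem_closedBall_zero_iff]
        exact (A i).le_of_opNorm_le_of_le (hA i) (hC i x hx.1)
      simpa using this (hz i)
    rw [norm_smul, norm_inv, Real.norm_natCast, inv_mul_le_iff₀ (by positivity)]
    refine (norm_sum_le _ _).trans ?_
    refine (Finset.sum_le_sum fun i _ => hzi i).trans ?_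
    simp
  obtain ⟨g, hg⟩ := exists_contMDiffMap_forall_mem_convex_of_local_const (n := 1)
    (modelWithCornersSelf ℝ (EuclideanSpace ℝ (Fin q))) htc hloc
  have hgs : ContDiff ℝ 1 g := g.contMDiff.contDiff
  obtain ⟨y, hy⟩ := brouwer_smooth volume g hgs (M * C) (fun y => htb y _ (hg y))
  obtain ⟨z, hz, hyz⟩ := hg y
  exact ⟨y, z, hz, by rw [← hyz, hy]⟩


/-- Existence of an additively `ε`-pure Nash equilibrium, with
`ε = 2H((√q + 1)MΔ/n)^γ`, in the nonconvex sum-aggregative game `Γ`. -/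
theorem exists_epsilon_PNE (n q d : ℕ) (hn : 0 < n) (M Δ H γ : ℝ)
    (hM : 0 < M) (hΔ : 0 < Δ) (hH : 0 < H) (hγ : 0 < γ)
    (X : Fin n → Set (EuclideanSpace ℝ (Fin d)))
    (hXne : ∀ i, (X i).Nonempty)
    (hXcp : ∀ i, IsCompact (X i)) (hXd : ∀ i, Metric.diam (X i) ≤ Δ)
    (A : Fin n → EuclideanSpace ℝ (Fin d) →L[ℝ] EuclideanSpace ℝ (Fin q))
    (hA : ∀ i, ‖A i‖ ≤ M)
    (θ : Fin n → EuclideanSpace ℝ (Fin d) → EuclideanSpace ℝ (Fin q) → ℝ)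
    (hlsc : ∀ i y, LowerSemicontinuousOn (fun xi => θ i xi y) (X i))
    (hHolder : ∀ i xi y y', |θ i xi y' - θ i xi y| ≤ H * ‖y' - y‖ ^ γ)
    (f : Fin n → (Fin n → EuclideanSpace ℝ (Fin d)) → ℝ)
    (hf : ∀ i x, f i x = θ i (x i) ((n : ℝ)⁻¹ • ∑ j, A j (x j))) :
    ∃ x : Fin n → EuclideanSpace ℝ (Fin d), (∀ i, x i ∈ X i) ∧
      ∀ i, ∀ y ∈ X i, f i x ≤ f i (Function.update x i y) +
        2 * H * ((Real.sqrt q + 1) * M * Δ / n) ^ γ := by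
  classical
  have hnR : (0 : ℝ) < n := by positivity
  set r : ℝ := M * Δ / n with hr
  have hr0 : 0 < r := by positivity
  have hq0 : 0 ≤ Real.sqrt q := Real.sqrt_nonneg _
  have hrw : (Real.sqrt q + 1) * M * Δ / n = (Real.sqrt q + 1) * r := by rw [hr]; ring
  rw [hrw]
  have hlt : (Real.sqrt q * r) ^ γ < ((Real.sqrt q + 1) * r) ^ γ :=
    Real.rpow_lt_rpow (by positivity) (by nlinarith) hγ
  obtain ⟨y, z, hz, hy⟩ := approx_equilibrium n q d hn M H γ
    (H * ((Real.sqrt q + 1) * r) ^ γ - H * (Real.sqrt q * r) ^ γ) hM hH hγ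
    (by rw [← mul_sub]; exact mul_pos hH (sub_pos.2 hlt)) X hXne hXcp A hA θ hlsc hHolder
  have hdist : ∀ i, ∀ a ∈ X i, ∀ b ∈ X i, ‖A i a - A i b‖ ≤ M * Δ := by
    intro i a ha b hb
    rw [← map_sub]
    refine (A i).le_of_opNorm_le_of_le (hA i) ?_
    rw [← dist_eq_norm]
    exact (Metric.dist_le_diam_of_mem (hXcp i).isBounded ha hb).trans (hXd i)
  obtain ⟨s, hs, hsn⟩ := starr hn _ z (M * Δ) (by positivity) (by
    rintro i _ ⟨a, ha, rfl⟩ _ ⟨b, hb, rfl⟩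
    exact hdist i a ha.1 b hb.1) hz
  choose x hx hxs using hs
  simp only [finrank_euclideanSpace, Fintype.card_fin] at hsn
  have hagg : ‖(n : ℝ)⁻¹ • ∑ j, A j (x j) - y‖ ≤ Real.sqrt q * r := by
    rw [hy, ← smul_sub, norm_smul, norm_inv, Real.norm_natCast, inv_mul_le_iff₀ hnR]
    simp only [hxs]
    refine hsn.trans (le_of_eq ?_)
    rw [hr]; field_simp
  refine ⟨x, fun i => (hx i).1, fun i x' hx' => ?_⟩
  rw [hf, hf, Function.update_self]
  set y1 := (n : ℝ)⁻¹ • ∑ j, A j (x j) with hy1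
  set y2 := (n : ℝ)⁻¹ • ∑ j, A j (Function.update x i x' j) with hy2
  have h12 : ‖y2 - y1‖ ≤ r := by
    have : ∑ j, A j (Function.update x i x' j) - ∑ j, A j (x j) = A i x' - A i (x i) := by
      rw [← Finset.sum_sub_distrib, Finset.sum_eq_single i]
      · simp
      · intro j _ hj; simp [hj]
      · simp
    rw [hy1, hy2, ← smul_sub, this, norm_smul, norm_inv, Real.norm_natCast,
      inv_mul_le_iff₀ hnR]
    refine (hdist i x' hx' (x i) (hx i).1).trans (le_of_eq ?_)
    rw [hr]; field_simp
  have h2 : ‖y2 - y‖ ≤ (Real.sqrt q + 1) * r := by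
    have := norm_add_le (y2 - y1) (y1 - y)
    rw [sub_add_sub_cancel] at this
    linarith
  have e1 := (abs_le.1 (hHolder i (x i) y y1)).2
  have e2 := (abs_le.1 (hHolder i x' y y2)).1
  have e3 := (hx i).2 x' hx'
  have p1 : H * ‖y1 - y‖ ^ γ ≤ H * (Real.sqrt q * r) ^ γ := by gcongr
  have p2 : H * ‖y2 - y‖ ^ γ ≤ H * ((Real.sqrt q + 1) * r) ^ γ := by gcongr
  linarith
end
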